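/- arXiv:1106.0096 — 3 statements merged into one kernel-verified Lean document; each statement's English description precedes it below -/
import Mathlib

section
/- Let S = {(arg(x), arg(y)) ∈ U² : x, y ∈ ℂ∖{0}, x + y + 1 = 0} be the coamoeba of the line x + y + 1 = 0 in (ℂ∖{0})². Then S is exactly the image in U² = (ℝ/2πℤ)² of the set {(α,β) ∈ (−π,π)² : |α − β| > π} ∪ {(π,0), (0,π), (π,π)}; that is, S consists of the interiors of the two triangles with vertex sets {(−π,0),(−π,π),(0,π)} and {(0,−π),(π,−π),(π,0)}, together with the three points (π,0), (0,π), (π,π), all taken modulo 2π. -/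
open scoped Real

/-!
Project a relation `x + y + z = 0` onto the normal of the direction of `y`: this is the law of
sines `‖x‖ sin (arg x - arg y) = ‖z‖ sin (arg y - arg z)`. For `z = 1` and `x` in the open upper
half-plane it reads `‖x‖ sin (arg x - arg y) = sin (arg y) < 0`, so the difference of the arguments
exceeds `π`. Conversely, the law of sines prescribes the norms of `x` and `y` in terms of their
arguments, and these values are positive when arguments in `(-π, π)` differ by more than `π`. If `x`
is real then so is `y`, and only the sign patterns of two real numbers with sum `-1` remain.
-/

section Trigonometry

theorem sin_neg_iff_pi_lt {θ : ℝ} (h₀ : 0 ≤ θ) (h₁ : θ < 2 * π) : Real.sin θ < 0 ↔ π < θ := by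
  refine ⟨fun h => not_le.1 fun hθ => h.not_ge (Real.sin_nonneg_of_nonneg_of_le_pi h₀ hθ),
    fun h => ?_⟩
  rw [← Real.sin_sub_two_pi]
  exact Real.sin_neg_of_neg_of_neg_pi_lt (by linarith) (by linarith)

theorem cyclic_sum_sin_sub_mul_exp_eq_zero (α β γ : ℂ) :
    Complex.sin (β - γ) * Complex.exp (α * Complex.I) +
      Complex.sin (γ - α) * Complex.exp (β * Complex.I) +
      Complex.sin (α - β) * Complex.exp (γ * Complex.I) = 0 := by
  simp only [Complex.exp_mul_I, Complex.sin_sub]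
  ring

end Trigonometry

section Argument

variable {x y z : ℂ}

theorem im_mul_exp_neg_mul_I (z : ℂ) (θ : ℝ) :
    (z * Complex.exp (-θ * Complex.I)).im = ‖z‖ * Real.sin (Complex.arg z - θ) := by
  conv_lhs => rw [← Complex.norm_mul_exp_arg_mul_I z]
  rw [mul_assoc, ← Complex.exp_add, ← add_mul, ← sub_eq_add_neg, ← Complex.ofReal_sub,
    Complex.im_ofReal_mul, Complex.exp_ofReal_mul_I_im]

theorem norm_mul_sin_arg_sub_arg_of_add_eq_zero (h : x + y + z = 0) :
    ‖x‖ * Real.sin (x.arg - y.arg) = ‖z‖ * Real.sin (y.arg - z.arg) := by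
  have hproj : ‖x‖ * Real.sin (x.arg - y.arg) + ‖y‖ * Real.sin (y.arg - y.arg) +
      ‖z‖ * Real.sin (z.arg - y.arg) = 0 := by
    simp only [← im_mul_exp_neg_mul_I, ← Complex.add_im, ← add_mul, h, zero_mul, Complex.zero_im]
  rw [sub_self, Real.sin_zero] at hproj
  rw [← neg_sub z.arg, Real.sin_neg]
  linarith

theorem arg_mem_Ioo_of_im_ne_zero (h : z.im ≠ 0) : z.arg ∈ Set.Ioo (-π) π :=
  ⟨z.neg_pi_lt_arg, Complex.arg_lt_pi_iff.2 (Or.inr h)⟩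

theorem arg_eq_zero_or_eq_pi_of_im_eq_zero (h : z.im = 0) : z.arg = 0 ∨ z.arg = π :=
  (le_or_gt 0 z.re).imp (fun hre => Complex.arg_eq_zero_iff.2 ⟨hre, h⟩)
    fun hre => Complex.arg_eq_pi_iff.2 ⟨hre, h⟩

theorem arg_ofReal_mul_exp_mul_I {r θ : ℝ} (hr : 0 < r) (hθ : θ ∈ Set.Ioc (-π) π) :
    Complex.arg (r * Complex.exp (θ * Complex.I)) = θ := by
  rw [Complex.exp_mul_I, Complex.arg_mul_cos_add_sin_mul_I hr hθ]

end Argument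

section Line

variable {x y : ℂ}

theorem im_eq_neg_im_of_add_add_one_eq_zero (h : x + y + 1 = 0) : y.im = -x.im := by
  have him : x.im + y.im = 0 := by simpa using congrArg Complex.im h
  linarith

theorem pi_lt_arg_sub_arg_of_im_pos (h : x + y + 1 = 0) (hx : 0 < x.im) :
    π < x.arg - y.arg := by
  have hy : y.arg < 0 :=
    Complex.arg_neg_iff.2 (by rw [im_eq_neg_im_of_add_add_one_eq_zero h]; linarith)
  have hxarg : 0 ≤ x.arg := Complex.arg_nonneg_iff.2 hx.le
  have hsines : ‖x‖ * Real.sin (x.arg - y.arg) = Real.sin y.arg := by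
    simpa using norm_mul_sin_arg_sub_arg_of_add_eq_zero h
  have hsin : Real.sin (x.arg - y.arg) < 0 := by
    refine neg_of_mul_neg_right ?_ (norm_nonneg x)
    rw [hsines]
    exact Real.sin_neg_of_neg_of_neg_pi_lt hy y.neg_pi_lt_arg
  exact (sin_neg_iff_pi_lt (by linarith) (abs_lt.1 (x.abs_arg_sub_arg_lt y)).2).1 hsin

theorem pi_lt_abs_arg_sub_arg_of_im_ne_zero (h : x + y + 1 = 0) (hx : x.im ≠ 0) :
    π < |x.arg - y.arg| := by
  rcases hx.lt_or_gt with hneg | hpos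
  · have hy : 0 < y.im := by rw [im_eq_neg_im_of_add_add_one_eq_zero h]; linarith
    rw [abs_sub_comm]
    exact (pi_lt_arg_sub_arg_of_im_pos (by rwa [add_comm y]) hy).trans_le (le_abs_self _)
  · exact (pi_lt_arg_sub_arg_of_im_pos h hpos).trans_le (le_abs_self _)

theorem arg_pair_eq_of_im_eq_zero (h : x + y + 1 = 0) (hx : x.im = 0) :
    (x.arg = π ∧ y.arg = 0) ∨ (x.arg = 0 ∧ y.arg = π) ∨ (x.arg = π ∧ y.arg = π) := by
  have hy : y.im = 0 := by rw [im_eq_neg_im_of_add_add_one_eq_zero h, hx, neg_zero]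
  have not_both_zero : ¬(x.arg = 0 ∧ y.arg = 0) := by
    rintro ⟨hx₀, hy₀⟩
    have hre : x.re + y.re + 1 = 0 := by simpa using congrArg Complex.re h
    linarith [(Complex.arg_eq_zero_iff.1 hx₀).1, (Complex.arg_eq_zero_iff.1 hy₀).1]
  have hxarg := arg_eq_zero_or_eq_pi_of_im_eq_zero hx
  have hyarg := arg_eq_zero_or_eq_pi_of_im_eq_zero hy
  tauto

theorem exists_arg_eq_of_pi_lt_sub {α β : ℝ} (hα : α < π) (hβ : -π < β) (h : π < α - β) :
    ∃ x y : ℂ, x ≠ 0 ∧ y ≠ 0 ∧ x + y + 1 = 0 ∧ x.arg = α ∧ y.arg = β := by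
  have hα₀ : 0 < α := by linarith
  have hβ₀ : β < 0 := by linarith
  have hsinα : 0 < Real.sin α := Real.sin_pos_of_pos_of_lt_pi hα₀ hα
  have hsinβ : Real.sin β < 0 := Real.sin_neg_of_neg_of_neg_pi_lt hβ₀ hβ
  have hsin : Real.sin (α - β) < 0 := (sin_neg_iff_pi_lt (by linarith) (by linarith)).2 h
  have hr : 0 < Real.sin β / Real.sin (α - β) := div_pos_of_neg_of_neg hsinβ hsin
  have hs : 0 < Real.sin (-α) / Real.sin (α - β) :=
    div_pos_of_neg_of_neg (by rwa [Real.sin_neg, neg_lt_zero]) hsin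
  refine ⟨_, _, mul_ne_zero (Complex.ofReal_ne_zero.2 hr.ne') (Complex.exp_ne_zero _),
    mul_ne_zero (Complex.ofReal_ne_zero.2 hs.ne') (Complex.exp_ne_zero _), ?_,
    arg_ofReal_mul_exp_mul_I hr ⟨by linarith, hα.le⟩,
    arg_ofReal_mul_exp_mul_I hs ⟨hβ, by linarith⟩⟩
  have hrelation := cyclic_sum_sin_sub_mul_exp_eq_zero α β 0
  have hsin' : Complex.sin (α - β) ≠ 0 := by exact_mod_cast hsin.ne
  simp only [sub_zero, zero_sub, zero_mul, Complex.exp_zero, mul_one] at hrelation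
  push_cast
  field_simp
  linear_combination hrelation

theorem exists_arg_eq_of_pi_lt_abs_sub {α β : ℝ} (hα : α ∈ Set.Ioo (-π) π)
    (hβ : β ∈ Set.Ioo (-π) π) (h : π < |α - β|) :
    ∃ x y : ℂ, x ≠ 0 ∧ y ≠ 0 ∧ x + y + 1 = 0 ∧ x.arg = α ∧ y.arg = β := by
  rcases lt_abs.1 h with h | h
  · exact exists_arg_eq_of_pi_lt_sub hα.2 hβ.1 h
  · rw [neg_sub] at h
    obtain ⟨y, x, hy, hx, hline, hyβ, hxα⟩ := exists_arg_eq_of_pi_lt_sub hβ.2 hα.1 h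
    exact ⟨x, y, hx, hy, by rwa [add_comm x], hxα, hyβ⟩

end Line

/-- The coamoeba of the line `x + y + 1 = 0` in `(ℂ∖{0})²` consists of the interiors
of the two triangles with vertices `{(-π,0),(-π,π),(0,π)}` and `{(0,-π),(π,-π),(π,0)}`
— i.e. the image in `U² = (ℝ/2πℤ)²` of `{(α,β) ∈ (-π,π)² : |α-β| > π}` —
together with the three points `(π,0)`, `(0,π)`, `(π,π)`. -/
theorem coAmoeba_line_in_two_torus :
    {p : Real.Angle × Real.Angle | ∃ x y : ℂ, x ≠ 0 ∧ y ≠ 0 ∧ x + y + 1 = 0 ∧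
        p = ((Complex.arg x : Real.Angle), (Complex.arg y : Real.Angle))} =
      {p : Real.Angle × Real.Angle | ∃ α β : ℝ,
          α ∈ Set.Ioo (-π) π ∧ β ∈ Set.Ioo (-π) π ∧ |α - β| > π ∧
          p = ((α : Real.Angle), (β : Real.Angle))} ∪
      {((π : Real.Angle), (0 : Real.Angle)), ((0 : Real.Angle), (π : Real.Angle)),
        ((π : Real.Angle), (π : Real.Angle))} := by
  ext p
  constructor
  · rintro ⟨x, y, -, -, hline, rfl⟩
    by_cases hx : x.im = 0
    · right
      rcases arg_pair_eq_of_im_eq_zero hline hx with ⟨hα, hβ⟩ | ⟨hα, hβ⟩ | ⟨hα, hβ⟩ <;>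
        simp [hα, hβ]
    · have hy : y.im ≠ 0 := by rwa [im_eq_neg_im_of_add_add_one_eq_zero hline, neg_ne_zero]
      exact Or.inl ⟨x.arg, y.arg, arg_mem_Ioo_of_im_ne_zero hx, arg_mem_Ioo_of_im_ne_zero hy,
        pi_lt_abs_arg_sub_arg_of_im_ne_zero hline hx, rfl⟩
  · rintro (⟨α, β, hα, hβ, hαβ, rfl⟩ | hp)
    · obtain ⟨x, y, hx, hy, hline, rfl, rfl⟩ := exists_arg_eq_of_pi_lt_abs_sub hα hβ hαβ
      exact ⟨x, y, hx, hy, hline, rfl⟩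
    · have arg_neg_two : Complex.arg (-2) = π := Complex.arg_eq_pi_iff.2 (by norm_num)
      have arg_neg_half : Complex.arg (-1 / 2) = π := Complex.arg_eq_pi_iff.2 (by norm_num)
      rcases hp with rfl | rfl | rfl
      · exact ⟨-2, 1, by norm_num, by norm_num, by norm_num, by simp [arg_neg_two]⟩
      · exact ⟨1, -2, by norm_num, by norm_num, by norm_num, by simp [arg_neg_two]⟩
      · exact ⟨-1 / 2, -1 / 2, by norm_num, by norm_num, by norm_num, by rw [arg_neg_half]⟩
end

section
/- With the phase limit lines h₀, h₁, h₂, h₃ as above: the four lines are pairwise disjoint in U³ if and only if ζ₁, ζ₂, ζ₃ are not collinear in ℂ (equivalently, if and only if the four zeros ζ₀ = ∞, ζ₁, ζ₂, ζ₃ do not all lie on a common circle in ℙ¹). -/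
open Filter Topology

noncomputable section

/-!
Two nonzero complex numbers have the same argument exactly when they lie on the same ray. Hence `h₀`
meets `hᵢ` iff the other two points lie in the same direction from `ζᵢ`, and `hᵢ` meets `hⱼ` iff
`ζᵢ` and `ζⱼ` lie in the same direction from the third point `ζₖ`. The opposite pairs `{h₀, hₖ}` and
`{hᵢ, hⱼ}` thus impose the same condition, and some pair meets iff the other two points lie in the
same direction from one of the three, that is, iff the three points are collinear.
-/

section Collinear

variable {R V P : Type*} [Field R] [LinearOrder R] [IsStrictOrderedRing R] [AddCommGroup V]
  [Module R V] [AddTorsor V P] {x y z : P}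

lemma collinear_of_sameRay_vsub (h : SameRay R (y -ᵥ x) (z -ᵥ x)) : Collinear R {x, y, z} := by
  rcases wbtw_total_of_sameRay_vsub_left h with hxyz | hxzy
  · exact hxyz.collinear
  · rw [Set.pair_comm]
    exact hxzy.collinear

lemma collinear_iff_sameRay_vsub :
    Collinear R {x, y, z} ↔ SameRay R (y -ᵥ x) (z -ᵥ x) ∨ SameRay R (x -ᵥ y) (z -ᵥ y) ∨
      SameRay R (x -ᵥ z) (y -ᵥ z) := by
  constructor
  · intro h
    rcases h.wbtw_or_wbtw_or_wbtw with hxyz | hyzx | hzxy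
    · exact .inl hxyz.sameRay_vsub_left
    · exact .inr (.inl hyzx.sameRay_vsub_left.symm)
    · exact .inr (.inr hzxy.sameRay_vsub_left)
  · rintro (hx | hy | hz)
    · exact collinear_of_sameRay_vsub hx
    · rw [Set.insert_comm]
      exact collinear_of_sameRay_vsub hy
    · rw [Set.pair_comm y z, Set.insert_comm x z]
      exact collinear_of_sameRay_vsub hz

end Collinear

lemma arg_coe_angle_eq_iff_sameRay {z w : ℂ} (hz : z ≠ 0) (hw : w ≠ 0) :
    (z.arg : Real.Angle) = w.arg ↔ SameRay ℝ z w := by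
  simp [Complex.sameRay_iff, hz, hw]

section PhaseLimitLine

/-- The phase limit line at the coordinate zero `∞` of the line `x ↦ [1 : x - ζ i]ᵢ`, which does
not depend on `ζ`: the diagonal of the torus `ι → Real.Angle`. -/
def phaseLimitLineAtInfinity (ι : Type*) : Set (ι → Real.Angle) :=
  Set.range (Function.const ι)

variable {ι : Type*}

/-- The phase limit line at the coordinate zero `ζ i` of the line `x ↦ [1 : x - ζ i]ᵢ`, encoded by
its equations, which constrain every coordinate but the `i`-th. -/
def phaseLimitLine (ζ : ι → ℂ) (i : ι) : Set (ι → Real.Angle) :=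
  {θ | ∀ j ≠ i, θ j = (ζ i - ζ j).arg}

variable {ζ : ι → ℂ} {i j : ι}

lemma phaseLimitLineAtInfinity_eq_setOf :
    phaseLimitLineAtInfinity ι = {θ | ∃ t : Real.Angle, θ = fun _ => t} :=
  Set.ext fun _ => exists_congr fun _ => eq_comm

lemma not_disjoint_phaseLimitLineAtInfinity_iff (hζ : ζ.Injective) :
    ¬ Disjoint (phaseLimitLineAtInfinity ι) (phaseLimitLine ζ i) ↔
      ∀ j k, SameRay ℝ (ζ i - ζ j) (ζ i - ζ k) := by
  have arg_eq_iff {j k : ι} (hj : j ≠ i) (hk : k ≠ i) :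
      ((ζ i - ζ j).arg : Real.Angle) = (ζ i - ζ k).arg ↔ SameRay ℝ (ζ i - ζ j) (ζ i - ζ k) :=
    arg_coe_angle_eq_iff_sameRay (sub_ne_zero.2 (hζ.ne hj.symm)) (sub_ne_zero.2 (hζ.ne hk.symm))
  rw [Set.not_disjoint_iff]
  constructor
  · rintro ⟨_, ⟨t, rfl⟩, ht⟩ j k
    rcases eq_or_ne j i with rfl | hj
    · simp
    rcases eq_or_ne k i with rfl | hk
    · simp
    exact (arg_eq_iff hj hk).1 ((ht j hj).symm.trans (ht k hk))
  · intro h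
    rcases subsingleton_or_nontrivial ι with _ | _
    · exact ⟨_, ⟨0, rfl⟩, fun j hj => absurd (Subsingleton.elim j i) hj⟩
    · obtain ⟨j, hj⟩ := exists_ne i
      exact ⟨_, ⟨(ζ i - ζ j).arg, rfl⟩, fun k hk => (arg_eq_iff hj hk).2 (h j k)⟩

lemma not_disjoint_phaseLimitLine_iff (hζ : ζ.Injective) (hij : i ≠ j) :
    ¬ Disjoint (phaseLimitLine ζ i) (phaseLimitLine ζ j) ↔
      ∀ k, SameRay ℝ (ζ i - ζ k) (ζ j - ζ k) := by
  classical
  have arg_eq_iff {k : ι} (hki : k ≠ i) (hkj : k ≠ j) :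
      ((ζ i - ζ k).arg : Real.Angle) = (ζ j - ζ k).arg ↔ SameRay ℝ (ζ i - ζ k) (ζ j - ζ k) :=
    arg_coe_angle_eq_iff_sameRay (sub_ne_zero.2 (hζ.ne hki.symm)) (sub_ne_zero.2 (hζ.ne hkj.symm))
  rw [Set.not_disjoint_iff]
  constructor
  · rintro ⟨θ, hi, hj⟩ k
    rcases eq_or_ne k i with rfl | hki
    · simp
    rcases eq_or_ne k j with rfl | hkj
    · simp
    exact (arg_eq_iff hki hkj).1 ((hi k hki).symm.trans (hj k hkj))
  · intro h
    refine ⟨Function.update (fun k => ((ζ i - ζ k).arg : Real.Angle)) i (ζ j - ζ i).arg,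
      fun k hki => Function.update_of_ne hki _ _, fun k hkj => ?_⟩
    rcases eq_or_ne k i with rfl | hki
    · exact Function.update_self ..
    · rw [Function.update_of_ne hki]
      exact (arg_eq_iff hki hkj).2 (h k)

lemma disjoint_phaseLimitLineAtInfinity_iff_of_forall_eq_or (hζ : ζ.Injective) (i j k : ι)
    (hι : ∀ l, l = i ∨ l = j ∨ l = k) :
    Disjoint (phaseLimitLineAtInfinity ι) (phaseLimitLine ζ i) ↔
      ¬ SameRay ℝ (ζ j - ζ i) (ζ k - ζ i) := by
  rw [← not_iff_not, not_not, not_disjoint_phaseLimitLineAtInfinity_iff hζ, ← sameRay_neg_iff,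
    neg_sub, neg_sub]
  refine ⟨fun h => h j k, fun h l m => ?_⟩
  rcases hι l with rfl | rfl | rfl <;>
    rcases hι m with rfl | rfl | rfl <;> simp [h, h.symm, SameRay.refl]

lemma disjoint_phaseLimitLine_iff_of_forall_eq_or (hζ : ζ.Injective) (i j k : ι)
    (hij : i ≠ j) (hι : ∀ l, l = i ∨ l = j ∨ l = k) :
    Disjoint (phaseLimitLine ζ i) (phaseLimitLine ζ j) ↔ ¬ SameRay ℝ (ζ i - ζ k) (ζ j - ζ k) := by
  rw [← not_iff_not, not_not, not_disjoint_phaseLimitLine_iff hζ hij]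
  refine ⟨fun h => h k, fun h l => ?_⟩
  rcases hι l with rfl | rfl | rfl <;> simp [h]

end PhaseLimitLine

section FinThree

lemma phaseLimitLine_fin_three_zero (ζ : Fin 3 → ℂ) :
    phaseLimitLine ζ 0 =
      {θ | ∃ t : Real.Angle, θ = ![t, ((ζ 0 - ζ 1).arg : Real.Angle), (ζ 0 - ζ 2).arg]} := by
  ext θ
  simp [phaseLimitLine, funext_iff, Fin.forall_fin_succ]

lemma phaseLimitLine_fin_three_one (ζ : Fin 3 → ℂ) :
    phaseLimitLine ζ 1 =
      {θ | ∃ t : Real.Angle, θ = ![((ζ 1 - ζ 0).arg : Real.Angle), t, (ζ 1 - ζ 2).arg]} := by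
  ext θ
  simp [phaseLimitLine, funext_iff, Fin.forall_fin_succ]

lemma phaseLimitLine_fin_three_two (ζ : Fin 3 → ℂ) :
    phaseLimitLine ζ 2 =
      {θ | ∃ t : Real.Angle, θ = ![((ζ 2 - ζ 0).arg : Real.Angle), (ζ 2 - ζ 1).arg, t]} := by
  ext θ
  simp [phaseLimitLine, funext_iff, Fin.forall_fin_succ]

variable {ζ : Fin 3 → ℂ}

lemma disjoint_phaseLimitLineAtInfinity_fin_three_iff_not_collinear (hζ : ζ.Injective) :
    (Disjoint (phaseLimitLineAtInfinity (Fin 3)) (phaseLimitLine ζ 0) ∧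
      Disjoint (phaseLimitLineAtInfinity (Fin 3)) (phaseLimitLine ζ 1) ∧
      Disjoint (phaseLimitLineAtInfinity (Fin 3)) (phaseLimitLine ζ 2)) ↔
      ¬ Collinear ℝ {ζ 0, ζ 1, ζ 2} := by
  rw [collinear_iff_sameRay_vsub, not_or, not_or,
    disjoint_phaseLimitLineAtInfinity_iff_of_forall_eq_or hζ 0 1 2 (by decide),
    disjoint_phaseLimitLineAtInfinity_iff_of_forall_eq_or hζ 1 0 2 (by decide),
    disjoint_phaseLimitLineAtInfinity_iff_of_forall_eq_or hζ 2 0 1 (by decide)]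
  simp only [vsub_eq_sub]

lemma disjoint_phaseLimitLine_fin_three_iff_not_collinear (hζ : ζ.Injective) :
    (Disjoint (phaseLimitLine ζ 0) (phaseLimitLine ζ 1) ∧
      Disjoint (phaseLimitLine ζ 0) (phaseLimitLine ζ 2) ∧
      Disjoint (phaseLimitLine ζ 1) (phaseLimitLine ζ 2)) ↔
      ¬ Collinear ℝ {ζ 0, ζ 1, ζ 2} := by
  rw [collinear_iff_sameRay_vsub,
    disjoint_phaseLimitLine_iff_of_forall_eq_or hζ 0 1 2 (by decide) (by decide),
    disjoint_phaseLimitLine_iff_of_forall_eq_or hζ 0 2 1 (by decide) (by decide),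
    disjoint_phaseLimitLine_iff_of_forall_eq_or hζ 1 2 0 (by decide) (by decide)]
  simp only [vsub_eq_sub]
  tauto

end FinThree

/-- The four phase limit lines `h₀, h₁, h₂, h₃` of the line in `ℙ³` with coordinate
zeros `∞, ζ₁, ζ₂, ζ₃` are pairwise disjoint in `U³` if and only if `ζ₁, ζ₂, ζ₃` are
not collinear in `ℂ` (equivalently, iff the four zeros are not cocircular in `ℙ¹`). -/
theorem phase_limit_lines_pairwise_disjoint_iff (ζ₁ ζ₂ ζ₃ : ℂ)
    (h12 : ζ₁ ≠ ζ₂) (h13 : ζ₁ ≠ ζ₃) (h23 : ζ₂ ≠ ζ₃) :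
    let h₀ : Set (Fin 3 → Real.Angle) := {θ | ∃ t : Real.Angle, θ = fun _ => t}
    let h₁ : Set (Fin 3 → Real.Angle) :=
      {θ | ∃ t : Real.Angle, θ = ![t, (Complex.arg (ζ₁ - ζ₂) : Real.Angle),
        (Complex.arg (ζ₁ - ζ₃) : Real.Angle)]}
    let h₂ : Set (Fin 3 → Real.Angle) :=
      {θ | ∃ t : Real.Angle, θ = ![(Complex.arg (ζ₂ - ζ₁) : Real.Angle), t,
        (Complex.arg (ζ₂ - ζ₃) : Real.Angle)]}
    let h₃ : Set (Fin 3 → Real.Angle) :=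
      {θ | ∃ t : Real.Angle, θ = ![(Complex.arg (ζ₃ - ζ₁) : Real.Angle),
        (Complex.arg (ζ₃ - ζ₂) : Real.Angle), t]}
    (Disjoint h₀ h₁ ∧ Disjoint h₀ h₂ ∧ Disjoint h₀ h₃ ∧
     Disjoint h₁ h₂ ∧ Disjoint h₁ h₃ ∧ Disjoint h₂ h₃) ↔
      ¬ Collinear ℝ ({ζ₁, ζ₂, ζ₃} : Set ℂ) := by
  intro h₀ h₁ h₂ h₃
  let ζ : Fin 3 → ℂ := ![ζ₁, ζ₂, ζ₃]
  have hζ : ζ.Injective := by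
    simp [ζ, Function.Injective, Fin.forall_fin_succ, h12, h13, h23, h12.symm, h13.symm, h23.symm]
  have hh₀ : h₀ = phaseLimitLineAtInfinity (Fin 3) := phaseLimitLineAtInfinity_eq_setOf.symm
  have hh₁ : h₁ = phaseLimitLine ζ 0 := (phaseLimitLine_fin_three_zero ζ).symm
  have hh₂ : h₂ = phaseLimitLine ζ 1 := (phaseLimitLine_fin_three_one ζ).symm
  have hh₃ : h₃ = phaseLimitLine ζ 2 := (phaseLimitLine_fin_three_two ζ).symm
  have h₀_iff := disjoint_phaseLimitLineAtInfinity_fin_three_iff_not_collinear hζ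
  have h_iff := disjoint_phaseLimitLine_fin_three_iff_not_collinear hζ
  rw [← hh₀, ← hh₁, ← hh₂, ← hh₃] at h₀_iff
  rw [← hh₁, ← hh₂, ← hh₃] at h_iff
  constructor
  · rintro ⟨h₀₁, h₀₂, h₀₃, -⟩
    exact h₀_iff.1 ⟨h₀₁, h₀₂, h₀₃⟩
  · intro h_not_collinear
    obtain ⟨h₀₁, h₀₂, h₀₃⟩ := h₀_iff.2 h_not_collinear
    exact ⟨h₀₁, h₀₂, h₀₃, h_iff.2 h_not_collinear⟩

end
end

section
/- Suppose ζ₁, ζ₂, ζ₃ ∈ ℂ are distinct and not collinear. Then the map arg∘φ : ℂ∖{ζ₁,ζ₂,ζ₃} → U³ is an immersion: for every x ∈ ℂ∖{ζ₁,ζ₂,ζ₃}, its differential at x — the ℝ-linear map ℂ → ℝ³ sending v to (Im(v/(x−ζ₁)), Im(v/(x−ζ₂)), Im(v/(x−ζ₃))) — is injective. -/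
/-!
The imaginary part of `v / (x - ζ)` vanishes exactly when `v` is parallel to the line through
`x` and `ζ`. Hence a nonzero kernel vector of the differential of `arg ∘ φ` at `x` is a common
direction of the lines joining `x` to the points `ζ i`, which exists exactly when all of the
`ζ i` lie on one line through `x`.
-/

open Submodule

section Collinear

variable {k V P ι : Type*} [DivisionRing k] [AddCommGroup V] [Module k V]

theorem mem_span_singleton_symm {v w : V} (hv : v ≠ 0) (h : v ∈ k ∙ w) : w ∈ k ∙ v := by
  simpa only [insert_empty_eq] using
    mem_span_insert_exchange (s := ∅) (by simpa only [insert_empty_eq] using h)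
      (by simpa only [span_empty, mem_bot] using hv)

variable [AddTorsor V P]

theorem collinear_insert_range_iff {x : P} {p : ι → P} :
    Collinear k (insert x (Set.range p)) ↔ ∃ v : V, ∀ i, x -ᵥ p i ∈ k ∙ v := by
  rw [collinear_iff_of_mem (Set.mem_insert x _)]
  refine exists_congr fun v ↦ ?_
  have hx : ∃ r : k, x = r • v +ᵥ x := ⟨0, by rw [zero_smul, zero_vadd]⟩
  simp only [Set.forall_mem_insert, Set.forall_mem_range, hx, true_and]
  refine forall_congr' fun i ↦ ?_
  rw [← neg_mem_iff, neg_vsub_eq_vsub_rev, mem_span_singleton]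
  simp only [eq_vadd_iff_vsub_eq, eq_comm]

theorem iInf_span_singleton_vsub_ne_bot_iff [Nontrivial V] {x : P} {p : ι → P}
    (hx : ∀ i, x ≠ p i) :
    ⨅ i, k ∙ (x -ᵥ p i) ≠ ⊥ ↔ Collinear k (insert x (Set.range p)) := by
  rw [collinear_insert_range_iff]
  constructor
  · intro h
    obtain ⟨v, hv, hv0⟩ := exists_mem_ne_zero_of_ne_bot h
    exact ⟨v, fun i ↦ mem_span_singleton_symm hv0 ((mem_iInf _).mp hv i)⟩
  · rintro ⟨v, hv⟩
    rcases isEmpty_or_nonempty ι with _ | ⟨⟨i₀⟩⟩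
    · rw [iInf_of_empty]
      exact top_ne_bot
    · have hv0 : v ≠ 0 := by
        rintro rfl
        exact hx i₀ (by simpa only [span_zero_singleton, mem_bot, vsub_eq_zero_iff_eq] using hv i₀)
      have hmem (i : ι) : v ∈ k ∙ (x -ᵥ p i) :=
        mem_span_singleton_symm (vsub_ne_zero.mpr (hx i)) (hv i)
      exact (Submodule.ne_bot_iff _).mpr ⟨v, (mem_iInf _).mpr hmem, hv0⟩

end Collinear

theorem im_div_eq_zero_iff_mem_span_singleton {v z : ℂ} (hz : z ≠ 0) :
    (v / z).im = 0 ↔ v ∈ ℝ ∙ z := by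
  rw [← Complex.conj_eq_iff_im, Complex.conj_eq_iff_real, mem_span_singleton]
  refine exists_congr fun r ↦ ?_
  rw [div_eq_iff hz, Complex.real_smul, eq_comm]

variable {ι : Type*}

/-- The differential at `x` of the map `y ↦ (arg (y - ζ i))ᵢ`, given by its formula
`v ↦ (Im (v / (x - ζ i)))ᵢ`. A coordinate with `x = ζ i` is zero. -/
noncomputable def argDifferential (ζ : ι → ℂ) (x : ℂ) : ℂ →ₗ[ℝ] ι → ℝ :=
  LinearMap.pi fun i ↦ Complex.imLm ∘ₗ LinearMap.mulRight ℝ (x - ζ i)⁻¹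

theorem argDifferential_apply (ζ : ι → ℂ) (x v : ℂ) (i : ι) :
    argDifferential ζ x v i = (v / (x - ζ i)).im := by
  rw [div_eq_mul_inv]
  rfl

theorem ker_argDifferential {ζ : ι → ℂ} {x : ℂ} (hx : ∀ i, x ≠ ζ i) :
    LinearMap.ker (argDifferential ζ x) = ⨅ i, ℝ ∙ (x - ζ i) := by
  ext v
  simp only [LinearMap.mem_ker, funext_iff, argDifferential_apply, Pi.zero_apply, mem_iInf,
    im_div_eq_zero_iff_mem_span_singleton (sub_ne_zero.mpr (hx _))]

theorem argPhi_immersion_general {ζ : ι → ℂ} {x : ℂ} (hx : ∀ i, x ≠ ζ i) :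
    Function.Injective (argDifferential ζ x) ↔
      ¬ Collinear ℝ (insert x (Set.range ζ)) := by
  rw [← LinearMap.ker_eq_bot, ker_argDifferential hx, ← iInf_span_singleton_vsub_ne_bot_iff hx,
    not_ne_iff]
  simp only [vsub_eq_sub]

/-- If `ζ₁, ζ₂, ζ₃` are distinct and not collinear, then `arg ∘ φ`, where
`φ(x) = (x-ζ₁, x-ζ₂, x-ζ₃)`, is an immersion: at every `x ∉ {ζ₁,ζ₂,ζ₃}` its
differential, the `ℝ`-linear map `v ↦ (Im(v/(x-ζ₁)), Im(v/(x-ζ₂)), Im(v/(x-ζ₃)))`,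
is injective. -/
theorem argPhi_immersion (ζ₁ ζ₂ ζ₃ : ℂ)
    (h12 : ζ₁ ≠ ζ₂) (h13 : ζ₁ ≠ ζ₃) (h23 : ζ₂ ≠ ζ₃)
    (hncol : ¬ Collinear ℝ ({ζ₁, ζ₂, ζ₃} : Set ℂ)) :
    ∀ x : ℂ, x ≠ ζ₁ → x ≠ ζ₂ → x ≠ ζ₃ →
      Function.Injective (fun v : ℂ =>
        (![(v / (x - ζ₁)).im, (v / (x - ζ₂)).im, (v / (x - ζ₃)).im] : Fin 3 → ℝ)) := by
  intro x h1 h2 h3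
  have hrange : Set.range ![ζ₁, ζ₂, ζ₃] = {ζ₁, ζ₂, ζ₃} := by
    simp only [Matrix.range_cons, Matrix.range_empty, Set.union_empty, Set.singleton_union]
  have hx : ∀ i, x ≠ ![ζ₁, ζ₂, ζ₃] i := by simp [Fin.forall_fin_succ, h1, h2, h3]
  have hncol' : ¬ Collinear ℝ (insert x (Set.range ![ζ₁, ζ₂, ζ₃])) := fun h ↦
    hncol (hrange ▸ h.subset (Set.subset_insert _ _))
  convert (argPhi_immersion_general hx).mpr hncol' using 1
  ext v i
  rw [argDifferential_apply]
  fin_cases i <;> rfl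
end
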